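/- arXiv:1807.03536 — 2 statements merged into one kernel-verified Lean document; each statement's English description precedes it below -/
import Mathlib

section
/- Let Φ̊ be an irreducible root system in V, (Λ_α) an extension datum of type (Φ̊, Y), and Φ^re the associated set of real roots. If Ψ is a closed subroot system of Φ^re, then Gr(Ψ) is either a closed subroot system or a semi-closed subroot system of Φ̊. If moreover Ψ is a maximal closed subroot system of Φ^re and Gr(Ψ) is semi-closed, then Gr(Ψ) is a maximal semi-closed subroot system of Φ̊. -/
open scoped RealInnerProductSpace Pointwise

noncomputable section

namespace BdS

variable {V Y : Type*} [NormedAddCommGroup V] [InnerProductSpace ℝ V]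
variable [AddCommGroup Y] [Module ℝ Y]

/-- `pairing β α = (β, α∨) = 2(β,α)/(α,α)`. -/
def pairing (β α : V) : ℝ := 2 * ⟪β, α⟫ / ⟪α, α⟫

/-- `reflRoot α v = s_α(v) = v − (v, α∨)α`. -/
def reflRoot (α v : V) : V := v - pairing v α • α

/-- A (finite) root system in `V`. -/
def IsRootSystem (Φ : Set V) : Prop :=
  Φ.Finite ∧ (0 : V) ∉ Φ ∧ Submodule.span ℝ Φ = ⊤ ∧
    (∀ α ∈ Φ, ∀ β ∈ Φ, reflRoot α β ∈ Φ) ∧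
    ∀ α ∈ Φ, ∀ β ∈ Φ, ∃ m : ℤ, pairing β α = (m : ℝ)

def IsReduced (Φ : Set V) : Prop :=
  ∀ α ∈ Φ, ∀ c : ℝ, c • α ∈ Φ → c • α = α ∨ c • α = -α

def IsIrreducible (Φ : Set V) : Prop :=
  ∀ Φ₁ Φ₂ : Set V, Φ = Φ₁ ∪ Φ₂ → (∀ x ∈ Φ₁, ∀ y ∈ Φ₂, ⟪x, y⟫ = 0) →
    Φ₁ = ∅ ∨ Φ₂ = ∅

/-- divisible roots -/
def divSet (Φ : Set V) : Set V := {α ∈ Φ | (2:ℝ)⁻¹ • α ∈ Φ}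
/-- non-divisible roots -/
def ndSet (Φ : Set V) : Set V := Φ \ divSet Φ
/-- short roots: non-divisible roots of non-maximal squared length -/
def shortSet (Φ : Set V) : Set V := {α ∈ ndSet Φ | ∃ β ∈ ndSet Φ, ⟪α, α⟫ < ⟪β, β⟫}
/-- long roots -/
def longSet (Φ : Set V) : Set V := ndSet Φ \ shortSet Φ

/-- An extension datum of type `(Φ, Y)`. -/
def IsExtensionDatum (Φ : Set V) (Λ : V → Set Y) : Prop :=
  (∀ α ∈ Φ, ∀ β ∈ Φ, ∀ z ∈ Λ α, ∀ y ∈ Λ β, y - pairing β α • z ∈ Λ (reflRoot α β)) ∧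
  (0 : Y) ∈ Λ 0 ∧
  (∀ α ∈ ndSet Φ, (0 : Y) ∈ Λ α) ∧
  (∀ α ∈ divSet Φ, (Λ α).Nonempty) ∧
  Submodule.span ℝ (⋃ α ∈ insert (0 : V) Φ, Λ α) = ⊤

/-- subroot system of a finite root system -/
def IsSubRS (Φ Δ : Set V) : Prop :=
  Δ.Nonempty ∧ Δ ⊆ Φ ∧ ∀ α ∈ Δ, ∀ β ∈ Δ, reflRoot α β ∈ Δ

def IsClosedSubRS (Φ Δ : Set V) : Prop :=
  IsSubRS Φ Δ ∧ ∀ α ∈ Δ, ∀ β ∈ Δ, α + β ∈ Φ → α + β ∈ Δ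

def IsMaxClosedSubRS (Φ Δ : Set V) : Prop :=
  IsClosedSubRS Φ Δ ∧ Δ ≠ Φ ∧
    ∀ Δ' : Set V, IsClosedSubRS Φ Δ' → Δ' ≠ Φ → Δ ⊆ Δ' → Δ' = Δ

/-- semi-closed subroot system, relative to given short/long/divisible parts -/
def IsSemiClosedSubRS (Φ Φs Φl Φd Δ : Set V) : Prop :=
  IsSubRS Φ Δ ∧ ¬ (∀ α ∈ Δ, ∀ β ∈ Δ, α + β ∈ Φ → α + β ∈ Δ) ∧
    ∀ α ∈ Δ, ∀ β ∈ Δ, α + β ∈ Φ → α + β ∉ Δ →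
      (α ∈ Φs ∧ β ∈ Φs ∧ α + β ∈ Φl ∪ Φd) ∨ (α ∈ Φl ∧ β ∈ Φl ∧ α + β ∈ Φd)

def IsMaxSemiClosedSubRS (Φ Φs Φl Φd Δ : Set V) : Prop :=
  IsSemiClosedSubRS Φ Φs Φl Φd Δ ∧
    ∀ Δ' : Set V, IsClosedSubRS Φ Δ' → Δ' ≠ Φ → ¬ Δ ⊂ Δ'

/-- the set of real roots attached to an extension datum -/
def PhiRe (Φ : Set V) (Λ : V → Set Y) : Set (V × Y) := {x | x.1 ∈ Φ ∧ x.2 ∈ Λ x.1}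

/-- affine reflection `s_{α ⊕ y}(β ⊕ z) = s_α(β) ⊕ (z − (β,α∨)y)` -/
def reflAff (a x : V × Y) : V × Y := (reflRoot a.1 x.1, x.2 - pairing x.1 a.1 • a.2)

/-- subroot system of a set of real roots `R` -/
def IsSubSys (R Ψ : Set (V × Y)) : Prop :=
  Ψ.Nonempty ∧ Ψ ⊆ R ∧ Ψ ≠ R ∧ ∀ a ∈ Ψ, ∀ x ∈ Ψ, reflAff a x ∈ Ψ

def IsClosedSubSys (R Ψ : Set (V × Y)) : Prop :=
  IsSubSys R Ψ ∧ ∀ x ∈ Ψ, ∀ y ∈ Ψ, x + y ∈ R → x + y ∈ Ψ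

def IsMaxClosedSubSys (R Ψ : Set (V × Y)) : Prop :=
  IsClosedSubSys R Ψ ∧ ∀ Ψ' : Set (V × Y), IsClosedSubSys R Ψ' → Ψ ⊆ Ψ' → Ψ' = Ψ

/-- gradient of a subroot system -/
def Gr (Ψ : Set (V × Y)) : Set V := {α | ∃ y : Y, (α, y) ∈ Ψ}

def Zset (Ψ : Set (V × Y)) (α : V) : Set Y := {y | (α, y) ∈ Ψ}

abbrev E (n : ℕ) := EuclideanSpace ℝ (Fin n)

def eps {n : ℕ} (i : Fin n) : E n := EuclideanSpace.single i 1

def shortBC (n : ℕ) : Set (E n) := {v | ∃ i : Fin n, v = eps i ∨ v = -eps i}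

def longBC (n : ℕ) : Set (E n) :=
  {v | ∃ i j : Fin n, i ≠ j ∧ ∃ c d : ℝ, (c = 1 ∨ c = -1) ∧ (d = 1 ∨ d = -1) ∧
    v = c • eps i + d • eps j}

def divBC (n : ℕ) : Set (E n) :=
  {v | ∃ i : Fin n, v = (2:ℝ) • eps i ∨ v = -((2:ℝ) • eps i)}

def BCn (n : ℕ) : Set (E n) := shortBC n ∪ longBC n ∪ divBC n
def Bn (n : ℕ) : Set (E n) := shortBC n ∪ longBC n
def Cn (n : ℕ) : Set (E n) := longBC n ∪ divBC n

section helpers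

variable {V Y : Type*} [NormedAddCommGroup V] [InnerProductSpace ℝ V]

lemma root_pos {Φ : Set V} (hΦ : IsRootSystem Φ) {α : V} (h : α ∈ Φ) : 0 < ⟪α, α⟫ := by
  apply real_inner_self_pos.2
  rintro rfl
  exact hΦ.2.1 h

lemma pairing_self {α : V} (h : 0 < ⟪α, α⟫) : pairing α α = 2 := by
  unfold pairing
  field_simp

lemma neg_root {Φ : Set V} (hΦ : IsRootSystem Φ) {α : V} (h : α ∈ Φ) : -α ∈ Φ := by
  have := hΦ.2.2.2.1 α h α h
  rw [reflRoot, pairing_self (root_pos hΦ h)] at this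
  have e : α - (2:ℝ) • α = -α := by module
  rwa [e] at this

lemma refl_inner {α : V} (h : 0 < ⟪α, α⟫) (x : V) :
    ⟪reflRoot α x, reflRoot α x⟫ = ⟪x, x⟫ := by
  unfold reflRoot pairing
  simp only [inner_sub_left, inner_sub_right, real_inner_smul_left, real_inner_smul_right,
    real_inner_comm x α]
  field_simp
  ring

lemma refl_refl {α : V} (h : 0 < ⟪α, α⟫) (x : V) (c : ℝ) :
    reflRoot α (c • reflRoot α x) = c • x := by
  have e : pairing (c • reflRoot α x) α = - (c * pairing x α) := by
    unfold reflRoot pairing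
    simp only [inner_sub_left, real_inner_smul_left]
    field_simp
    ring
  rw [reflRoot, e, reflRoot]
  module

lemma refl_nd {Φ : Set V} (hΦ : IsRootSystem Φ) {α δ : V} (h : α ∈ Φ) (hδ : δ ∈ ndSet Φ) :
    reflRoot α δ ∈ ndSet Φ := by
  refine ⟨hΦ.2.2.2.1 α h δ hδ.1, fun hd => hδ.2 ⟨hδ.1, ?_⟩⟩
  have := hΦ.2.2.2.1 α h _ hd.2
  rwa [refl_refl (root_pos hΦ h)] at this

lemma exists_conj {Φ : Set V} (hΦ : IsRootSystem Φ) (hirr : IsIrreducible Φ) {α δ : V}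
    (h : α ∈ Φ) (hδ : δ ∈ ndSet Φ) :
    ∃ δ' ∈ ndSet Φ, ⟪δ', δ'⟫ = ⟪δ, δ⟫ ∧ ⟪α, δ'⟫ ≠ 0 := by
  by_contra hcon
  push Not at hcon
  have := hirr {β | β ∈ Φ ∧ ∃ δ' ∈ ndSet Φ, ⟪δ', δ'⟫ = ⟪δ, δ⟫ ∧ ⟪β, δ'⟫ ≠ 0}
    {β | β ∈ Φ ∧ ∀ δ' ∈ ndSet Φ, ⟪δ', δ'⟫ = ⟪δ, δ⟫ → ⟪β, δ'⟫ = 0} ?_ ?_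
  · rcases this with h1 | h1
    · have : δ ∈ (∅ : Set V) := by
        rw [← h1]
        exact ⟨hδ.1, δ, hδ, rfl, (root_pos hΦ hδ.1).ne'⟩
      exact this
    · have : α ∈ (∅ : Set V) := by
        rw [← h1]
        exact ⟨h, hcon⟩
      exact this
  · ext β
    simp only [Set.mem_union, Set.mem_setOf_eq]
    constructor
    · intro hb
      by_cases hh : ∀ δ' ∈ ndSet Φ, ⟪δ', δ'⟫ = ⟪δ, δ⟫ → ⟪β, δ'⟫ = 0
      · exact Or.inr ⟨hb, hh⟩
      · push Not at hh
        exact Or.inl ⟨hb, hh⟩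
    · rintro (hb | hb) <;> exact hb.1
  · rintro x ⟨hx, δ', hδ', e, hne⟩ y ⟨hy, hy'⟩
    have h1 := hy' δ' hδ' e
    have h2 := hy' _ (refl_nd hΦ hx hδ') (by rw [refl_inner (root_pos hΦ hx), e])
    have hp := root_pos hΦ hx
    rw [reflRoot, inner_sub_right, h1, real_inner_smul_right, zero_sub, neg_eq_zero,
      mul_eq_zero] at h2
    rw [real_inner_comm]
    rcases h2 with h2 | h2
    · exfalso
      unfold pairing at h2
      rw [real_inner_comm] at hne
      have : 2 * ⟪δ', x⟫ / ⟪x, x⟫ ≠ 0 := by positivity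
      exact this h2
    · exact h2

/-- integrality of the two pairings together with Cauchy-Schwarz -/
lemma pair_ints {Φ : Set V} (hΦ : IsRootSystem Φ) {α β : V} (ha : α ∈ Φ) (hb : β ∈ Φ) :
    ∃ m n : ℤ, pairing β α = m ∧ pairing α β = n ∧ (m : ℝ) * ⟪α, α⟫ = 2 * ⟪α, β⟫ ∧
      (n : ℝ) * ⟪β, β⟫ = 2 * ⟪α, β⟫ ∧ m * n ≤ 4 ∧ 0 ≤ m * n ∧
      (m * n = 4 → β = ((m : ℝ) / 2) • α) := by
  obtain ⟨m, hm⟩ := hΦ.2.2.2.2 α ha β hb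
  obtain ⟨n, hn⟩ := hΦ.2.2.2.2 β hb α ha
  have pa := root_pos hΦ ha
  have pb := root_pos hΦ hb
  have em : (m : ℝ) * ⟪α, α⟫ = 2 * ⟪α, β⟫ := by
    rw [← hm, pairing, real_inner_comm β α]; field_simp
  have en : (n : ℝ) * ⟪β, β⟫ = 2 * ⟪α, β⟫ := by
    rw [← hn, pairing]; field_simp
  have cs := real_inner_mul_inner_self_le α β
  have key : ((m : ℝ) * n) * (⟪α, α⟫ * ⟪β, β⟫) = 4 * (⟪α, β⟫ * ⟪α, β⟫) := by
    calc _ = ((m : ℝ) * ⟪α, α⟫) * (n * ⟪β, β⟫) := by ring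
      _ = _ := by rw [em, en]; ring
  have pab := mul_pos pa pb
  refine ⟨m, n, hm, hn, em, en, ?_, ?_, ?_⟩
  · have : (m : ℝ) * n ≤ 4 := by
      by_contra hc
      push Not at hc
      nlinarith
    exact_mod_cast this
  · have : (0 : ℝ) ≤ (m : ℝ) * n := by
      by_contra hc
      push Not at hc
      nlinarith [mul_self_nonneg ⟪α, β⟫]
    exact_mod_cast this
  · intro h4
    have h4' : (m : ℝ) * n = 4 := by exact_mod_cast h4
    rw [← sub_eq_zero, ← inner_self_eq_zero (𝕜 := ℝ)]
    simp only [inner_sub_left, inner_sub_right, real_inner_smul_left, real_inner_smul_right,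
      real_inner_comm α β]
    have hi : ⟪α, β⟫ = m * ⟪α, α⟫ / 2 := by linarith
    rw [h4', hi] at key
    have e2 : ⟪β, β⟫ = m * m * ⟪α, α⟫ / 4 := by
      have : ⟪α, α⟫ * ⟪β, β⟫ = ⟪α, α⟫ * (m * m * ⟪α, α⟫ / 4) := by linarith
      exact mul_left_cancel₀ pa.ne' this
    rw [e2, hi]
    ring

lemma ratio {Φ : Set V} (hΦ : IsRootSystem Φ) (hirr : IsIrreducible Φ) {α δ : V}
    (h : α ∈ Φ) (hδ : δ ∈ ndSet Φ) (hlt : ⟪α, α⟫ < ⟪δ, δ⟫) :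
    ⟪δ, δ⟫ = 2 * ⟪α, α⟫ ∨ ⟪δ, δ⟫ = 3 * ⟪α, α⟫ := by
  obtain ⟨δ', hd, e, hne⟩ := exists_conj hΦ hirr h hδ
  obtain ⟨m, n, -, -, em, en, h4, h0, heq⟩ := pair_ints hΦ h hd.1
  rw [e] at en
  have pa := root_pos hΦ h
  have hn0 : n ≠ 0 := by
    rintro rfl
    apply hne
    push_cast at en
    linarith
  have hm0 : m ≠ 0 := by
    rintro rfl
    apply hne
    push_cast at em
    linarith
  have e3 : (m : ℝ) * ⟪α, α⟫ = n * ⟪δ, δ⟫ := by linarith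
  have hno4 : ¬ (m * n = 4 ∧ (m = 4 ∨ m = -4)) := by
    rintro ⟨h5, h6⟩
    have h7 := heq h5
    apply hd.2
    refine ⟨hd.1, ?_⟩
    rcases h6 with rfl | rfl
    · have : (2:ℝ)⁻¹ • δ' = α := by
        rw [h7]; push_cast; module
      rwa [this]
    · have : (2:ℝ)⁻¹ • δ' = -α := by
        rw [h7]; push_cast; module
      rw [this]
      exact neg_root hΦ h
  have hmn : |m| * |n| ≤ 4 := by
    rw [← abs_mul, abs_of_nonneg h0]; exact h4
  have hm1 : 1 ≤ |m| := Int.one_le_abs hm0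
  have hn1 : 1 ≤ |n| := Int.one_le_abs hn0
  have bm : |m| ≤ 4 := by nlinarith
  have bn : |n| ≤ 4 := by nlinarith
  rw [abs_le] at bm bn
  obtain ⟨bm1, bm2⟩ := bm
  obtain ⟨bn1, bn2⟩ := bn
  interval_cases m <;> interval_cases n <;> simp at * <;>
    first
    | (exfalso; linarith)
    | (left; linarith)
    | (right; linarith)

lemma semi_cond {Φ : Set V} (hΦ : IsRootSystem Φ) (hirr : IsIrreducible Φ) {Δ : Set V}
    (hΔ : IsSubRS Φ Δ) {α β : V} (ha : α ∈ Δ) (hb : β ∈ Δ) (hab : α + β ∈ Φ)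
    (hn : α + β ∉ Δ) :
    (α ∈ shortSet Φ ∧ β ∈ shortSet Φ ∧ α + β ∈ longSet Φ ∪ divSet Φ) ∨
      (α ∈ longSet Φ ∧ β ∈ longSet Φ ∧ α + β ∈ divSet Φ) := by
  have ha' := hΔ.2.1 ha
  have hb' := hΔ.2.1 hb
  have pa := root_pos hΦ ha'
  have pb := root_pos hΦ hb'
  have pg := root_pos hΦ hab
  obtain ⟨q, p, eq, ep, iq, ip, h4, h0, hprop⟩ := pair_ints hΦ ha' hb'
  have q1 : q ≠ -1 := by
    rintro rfl
    apply hn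
    have := hΔ.2.2 α ha β hb
    rw [reflRoot, eq] at this
    convert this using 1
    push_cast; module
  have p1 : p ≠ -1 := by
    rintro rfl
    apply hn
    have := hΔ.2.2 β hb α ha
    rw [reflRoot, ep] at this
    convert this using 1
    push_cast; module
  have hgg : ⟪α + β, α + β⟫ = ⟪α, α⟫ + 2 * ⟪α, β⟫ + ⟪β, β⟫ := real_inner_add_add_self α β
  have hag : ⟪α, α + β⟫ = ⟪α, α⟫ + ⟪α, β⟫ := inner_add_right _ _ _
  have hbg : ⟪β, α + β⟫ = ⟪α, β⟫ + ⟪β, β⟫ := by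
    rw [inner_add_right, real_inner_comm]
  obtain ⟨a, a', -, -, ia, ia', k4, k0, kprop⟩ := pair_ints hΦ ha' hab
  obtain ⟨b, b', -, -, ib, ib', l4, l0, lprop⟩ := pair_ints hΦ hb' hab
  have qa : a = 2 + q := by
    have : (a : ℝ) = 2 + q := by
      apply mul_right_cancel₀ pa.ne'
      linarith
    exact_mod_cast this
  have pb' : b = 2 + p := by
    have : (b : ℝ) = 2 + p := by
      apply mul_right_cancel₀ pb.ne'
      linarith
    exact_mod_cast this
  -- sign consistency
  have spos : 0 ≤ q := by
    by_contra hq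
    have hin : ⟪α, β⟫ < 0 := by
      have : (q : ℝ) < 0 := by exact_mod_cast (not_le.1 hq)
      nlinarith
    have hp : p < 0 := by
      have : (p : ℝ) < 0 := by
        by_contra hc
        push Not at hc
        nlinarith
      exact_mod_cast this
    have hq2 : q ≤ -2 := by omega
    have hp2 : p ≤ -2 := by omega
    have : q = -2 := by nlinarith
    have : p = -2 := by nlinarith
    subst q p
    push_cast at iq ip
    linarith
  have hin0 : 0 ≤ ⟪α, β⟫ := by
    have : (0 : ℝ) ≤ q := by exact_mod_cast spos
    nlinarith
  have a'pos : 1 ≤ a' := by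
    have : (0 : ℝ) < a' := by
      by_contra hc
      push Not at hc
      nlinarith
    have : 0 < a' := by exact_mod_cast this
    omega
  have b'pos : 1 ≤ b' := by
    have : (0 : ℝ) < b' := by
      by_contra hc
      push Not at hc
      nlinarith
    have : 0 < b' := by exact_mod_cast this
    omega
  have hq2 : q ≤ 2 := by nlinarith
  by_cases hq : q = 2
  · -- β = α
    have ha4 : a * a' = 4 := by nlinarith
    have hg := kprop ha4
    have hba : α + β = (2:ℝ) • α := by
      rw [hg, qa, hq]; push_cast; norm_num
    have hβ : β = α := by
      have : β = (2:ℝ) • α - α := by rw [← hba]; abel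
      rw [this]; module
    have hdiv : α + β ∈ divSet Φ := by
      refine ⟨hab, ?_⟩
      rw [hba, smul_smul]
      norm_num
      exact ha'
    have hnd : α ∈ ndSet Φ := by
      refine ⟨ha', fun hd => ?_⟩
      have hd' := hd.2
      obtain ⟨m, n, -, -, im, inn, -⟩ := pair_ints hΦ hd' hab
      rw [hba] at inn
      simp only [real_inner_smul_left, real_inner_smul_right] at inn
      have : (n : ℝ) * 2 = 1 := by
        apply mul_right_cancel₀ pa.ne'
        linarith
      have : n * 2 = 1 := by exact_mod_cast this
      omega
    rw [hβ] at hdiv ⊢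
    by_cases hs : α ∈ shortSet Φ
    · exact Or.inl ⟨hs, hs, Or.inr hdiv⟩
    · exact Or.inr ⟨⟨hnd, hs⟩, ⟨hnd, hs⟩, hdiv⟩
  -- now |α| = |β| and |γ|² = 2|α|² or 3|α|²
  have key : ⟪α, α⟫ = ⟪β, β⟫ ∧ a' = 1 ∧ b' = 1 ∧
      ((q = 0 ∧ ⟪α + β, α + β⟫ = 2 * ⟪α, α⟫) ∨ (q = 1 ∧ ⟪α + β, α + β⟫ = 3 * ⟪α, α⟫)) := by
    have hqc : q = 0 ∨ q = 1 := by omega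
    rcases hqc with rfl | rfl
    · push_cast at iq
      have hi : ⟪α, β⟫ = 0 := by linarith
      rw [hi] at hag hbg hgg
      have a'1 : a' = 1 := by
        have : (a' : ℝ) < 2 := by
          by_contra hc
          push Not at hc
          nlinarith
        have : a' < 2 := by exact_mod_cast this
        omega
      have hl : ⟪α, α⟫ = ⟪β, β⟫ := by
        rw [a'1] at ia'
        push_cast at ia'
        linarith
      refine ⟨hl, a'1, ?_, Or.inl ⟨rfl, by linarith⟩⟩
      have : (b' : ℝ) = 1 := by
        apply mul_right_cancel₀ pg.ne'
        linarith
      exact_mod_cast this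
    · push_cast at iq
      have a'1 : a' = 1 := by nlinarith
      have hpp : 0 < p := by
        have : (0:ℝ) < p := by
          by_contra hc
          push Not at hc
          nlinarith
        exact_mod_cast this
      have b'1 : b' = 1 := by nlinarith
      rw [a'1] at ia'
      rw [b'1] at ib'
      push_cast at ia' ib'
      exact ⟨by linarith, a'1, b'1, Or.inr ⟨rfl, by linarith⟩⟩
  obtain ⟨hl, a1, b1, hcase⟩ := key
  have nd_of : ∀ x ∈ Φ, (1 : ℝ) * ⟪α + β, α + β⟫ = 2 * ⟪x, α + β⟫ → x ∈ ndSet Φ := by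
    intro x hx e
    refine ⟨hx, fun hd => ?_⟩
    obtain ⟨m, n, -, -, im, inn, -⟩ := pair_ints hΦ hd.2 hab
    rw [real_inner_smul_left] at inn
    have : (n : ℝ) * 2 = 1 := by
      apply mul_right_cancel₀ pg.ne'
      linarith
    have : n * 2 = 1 := by exact_mod_cast this
    omega
  have nda : α ∈ ndSet Φ := nd_of α ha' (by rw [a1] at ia'; push_cast at ia'; exact ia')
  have ndb : β ∈ ndSet Φ := nd_of β hb' (by rw [b1] at ib'; push_cast at ib'; exact ib')
  by_cases hdiv : α + β ∈ divSet Φ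
  · by_cases hs : α ∈ shortSet Φ
    · obtain ⟨x, hx, hlt⟩ := hs.2
      exact Or.inl ⟨hs, ⟨ndb, x, hx, by rwa [← hl]⟩, Or.inr hdiv⟩
    · refine Or.inr ⟨⟨nda, hs⟩, ⟨ndb, fun hs' => hs ?_⟩, hdiv⟩
      obtain ⟨x, hx, hlt⟩ := hs'.2
      exact ⟨nda, x, hx, by rwa [hl]⟩
  · have ndg : α + β ∈ ndSet Φ := ⟨hab, hdiv⟩
    have hlt : ⟪α, α⟫ < ⟪α + β, α + β⟫ := by linarith
    refine Or.inl ⟨⟨nda, _, ndg, hlt⟩, ⟨ndb, _, ndg, by rwa [← hl]⟩, Or.inl ⟨ndg, ?_⟩⟩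
    rintro ⟨-, x, hx, hx'⟩
    have r1 := ratio hΦ hirr ha' hx (hlt.trans hx')
    have r2 := ratio hΦ hirr hab hx hx'
    rcases hcase with ⟨-, hc⟩ | ⟨-, hc⟩ <;> rcases r1 with r1 | r1 <;> rcases r2 with r2 | r2 <;>
      linarith

end helpers

/-- Section 3.3: the gradient of a closed subroot system is closed or semi-closed;
for a maximal closed subroot system with semi-closed gradient, the gradient is
maximal semi-closed. -/
theorem statement6 {V Y : Type*} [NormedAddCommGroup V] [InnerProductSpace ℝ V]
    [AddCommGroup Y] [Module ℝ Y] [FiniteDimensional ℝ V] [FiniteDimensional ℝ Y]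
    (Φ : Set V) (hΦ : IsRootSystem Φ) (hirr : IsIrreducible Φ)
    (Λ : V → Set Y) (hΛ : IsExtensionDatum Φ Λ)
    (Ψ : Set (V × Y)) (hΨ : IsClosedSubSys (PhiRe Φ Λ) Ψ) :
    (IsClosedSubRS Φ (Gr Ψ) ∨
      IsSemiClosedSubRS Φ (shortSet Φ) (longSet Φ) (divSet Φ) (Gr Ψ)) ∧
    (IsMaxClosedSubSys (PhiRe Φ Λ) Ψ →
      IsSemiClosedSubRS Φ (shortSet Φ) (longSet Φ) (divSet Φ) (Gr Ψ) →
      IsMaxSemiClosedSubRS Φ (shortSet Φ) (longSet Φ) (divSet Φ) (Gr Ψ)) := by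
  have hsub : IsSubRS Φ (Gr Ψ) := by
    obtain ⟨⟨hne, hss, -, hrefl⟩, -⟩ := hΨ
    refine ⟨?_, ?_, ?_⟩
    · obtain ⟨⟨x, y⟩, hx⟩ := hne
      exact ⟨x, y, hx⟩
    · rintro x ⟨y, hx⟩
      exact (hss hx).1
    · rintro α ⟨y, ha⟩ β ⟨z, hb⟩
      exact ⟨_, hrefl _ ha _ hb⟩
  refine ⟨?_, ?_⟩
  · by_cases hc : ∀ α ∈ Gr Ψ, ∀ β ∈ Gr Ψ, α + β ∈ Φ → α + β ∈ Gr Ψ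
    · exact Or.inl ⟨hsub, hc⟩
    · exact Or.inr ⟨hsub, hc, fun α ha β hb hab hn => semi_cond hΦ hirr hsub ha hb hab hn⟩
  · intro hmax hsemi
    refine ⟨hsemi, fun Δ' hΔ' hne hlt => ?_⟩
    have hΛne : ∀ α ∈ Φ, (Λ α).Nonempty := by
      intro α ha
      by_cases hd : α ∈ divSet Φ
      · exact hΛ.2.2.2.1 α hd
      · exact ⟨0, hΛ.2.2.1 α ⟨ha, hd⟩⟩
    have hsubΨ : Ψ ⊆ {x : V × Y | x.1 ∈ Δ' ∧ x.2 ∈ Λ x.1} := fun x hx =>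
      ⟨hlt.1 ⟨x.2, hx⟩, (hΨ.1.2.1 hx).2⟩
    have hcl : IsClosedSubSys (PhiRe Φ Λ) {x : V × Y | x.1 ∈ Δ' ∧ x.2 ∈ Λ x.1} := by
      refine ⟨⟨hΨ.1.1.mono hsubΨ, fun x hx => ⟨hΔ'.1.2.1 hx.1, hx.2⟩, ?_, ?_⟩, ?_⟩
      · intro heq
        apply hne
        refine Set.Subset.antisymm hΔ'.1.2.1 fun α ha => ?_
        obtain ⟨y, hy⟩ := hΛne α ha
        have : (α, y) ∈ PhiRe Φ Λ := ⟨ha, hy⟩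
        rw [← heq] at this
        exact this.1
      · intro a ha x hx
        exact ⟨hΔ'.1.2.2 _ ha.1 _ hx.1,
          hΛ.1 _ (hΔ'.1.2.1 ha.1) _ (hΔ'.1.2.1 hx.1) _ ha.2 _ hx.2⟩
      · intro x hx y hy hxy
        exact ⟨hΔ'.2 _ hx.1 _ hy.1 hxy.1, hxy.2⟩
    have heq := hmax.2 _ hcl hsubΨ
    apply hlt.2
    intro α ha
    obtain ⟨y, hy⟩ := hΛne α (hΔ'.1.2.1 ha)
    refine ⟨y, ?_⟩
    rw [← heq]
    exact ⟨ha, hy⟩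


end BdS
end
end

section
/- Let Φ̊ ⊂ ℝⁿ be the root system of type BC_n with n ≥ 2. A subset Φ̊' ⊆ Φ̊ is a maximal closed subroot system of Φ̊ if and only if Φ̊_d ⊆ Φ̊' and Φ̊' ∩ (Φ̊_s ∪ Φ̊_ℓ) is a maximal closed subroot system of the reduced root system Φ̊_s ∪ Φ̊_ℓ (which is of type B_n). Equivalently, the maximal closed subroot systems of Φ̊ are exactly the sets Φ̊_d ∪ Φ̊'' where Φ̊'' is a maximal closed subroot system of Φ̊_s ∪ Φ̊_ℓ. -/
open scoped RealInnerProductSpace Pointwise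

noncomputable section

namespace BdS

variable {V Y : Type*} [NormedAddCommGroup V] [InnerProductSpace ℝ V]
variable [AddCommGroup Y] [Module ℝ Y]

lemma inner_eps {n : ℕ} (i j : Fin n) : ⟪(eps i : E n), eps j⟫ = if i = j then (1:ℝ) else 0 := by
  unfold eps
  rw [EuclideanSpace.inner_single_left]
  simp [Pi.single_apply]

lemma pairing_add' (x y α : V) : pairing (x + y) α = pairing x α + pairing y α := by
  unfold pairing; rw [inner_add_left]; ring

lemma pairing_smul' (c : ℝ) (x α : V) : pairing (c • x) α = c * pairing x α := by
  unfold pairing; rw [real_inner_smul_left]; ring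

lemma refl_add (x y α : V) : reflRoot α (x + y) = reflRoot α x + reflRoot α y := by
  unfold reflRoot; rw [pairing_add', add_smul]; abel

lemma refl_smul (c : ℝ) (x α : V) : reflRoot α (c • x) = c • reflRoot α x := by
  unfold reflRoot; rw [pairing_smul', smul_sub, mul_smul]

lemma refl_self (α : V) (h : α ≠ 0) : reflRoot α α = -α := by
  unfold reflRoot pairing
  have : ⟪α, α⟫ ≠ 0 := by simpa using h
  rw [mul_div_assoc, div_self this, mul_one, two_smul]; abel

lemma mem_short {n : ℕ} {v : E n} :
    v ∈ shortBC n ↔ ∃ i : Fin n, ∃ c : ℝ, (c = 1 ∨ c = -1) ∧ v = c • eps i := by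
  constructor
  · rintro ⟨i, h | h⟩
    · exact ⟨i, 1, by simp, by simp [h]⟩
    · exact ⟨i, -1, by simp, by simp [h]⟩
  · rintro ⟨i, c, rfl | rfl, h⟩
    · exact ⟨i, by simp [h]⟩
    · exact ⟨i, by simp [h]⟩

lemma mem_div {n : ℕ} {v : E n} :
    v ∈ divBC n ↔ ∃ i : Fin n, ∃ c : ℝ, (c = 1 ∨ c = -1) ∧ v = (2 * c) • eps i := by
  constructor
  · rintro ⟨i, h | h⟩
    · exact ⟨i, 1, by simp, by simp [h]⟩
    · exact ⟨i, -1, by simp, by simp [h]⟩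
  · rintro ⟨i, c, rfl | rfl, h⟩
    · exact ⟨i, by simp [h]⟩
    · exact ⟨i, by simp [h]⟩

/-- integrality of pairings and the signed permutation attached to a root -/
lemma pairing_eps {n : ℕ} {α : E n} (hα : α ∈ BCn n) (k : Fin n) :
    ∃ m : ℤ, pairing (eps k) α = m := by
  rcases hα with (h | h) | h
  · obtain ⟨i, c, hc, rfl⟩ := mem_short.1 h
    simp only [pairing, inner_smul_left, inner_smul_right, inner_eps]
    rcases hc with rfl | rfl <;> by_cases hk : k = i
    · exact ⟨2, by simp [hk]⟩
    · exact ⟨0, by simp [hk]⟩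
    · exact ⟨-2, by simp [hk]⟩
    · exact ⟨0, by simp [hk]⟩
  · obtain ⟨i, j, hij, c, d, hc, hd, rfl⟩ := h
    have hc2 : c * c = 1 := by rcases hc with rfl | rfl <;> norm_num
    have hd2 : d * d = 1 := by rcases hd with rfl | rfl <;> norm_num
    have hcz : ∃ m : ℤ, c = m := by
      rcases hc with rfl | rfl
      exacts [⟨1, by simp⟩, ⟨-1, by simp⟩]
    have hdz : ∃ m : ℤ, d = m := by
      rcases hd with rfl | rfl
      exacts [⟨1, by simp⟩, ⟨-1, by simp⟩]
    have key : pairing (eps k) (c • eps i + d • eps j)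
        = (if k = i then c else 0) + (if k = j then d else 0) := by
      simp only [pairing, inner_add_left, inner_add_right, real_inner_smul_left,
        real_inner_smul_right, inner_eps, hij, hij.symm, if_true, if_false]
      have : c * (c * 1) + d * (c * 0) + (c * (d * 0) + d * (d * 1)) = 2 := by linarith
      simp only [mul_one, mul_zero, add_zero, zero_add, hc2, hd2, mul_ite]
      ring
    rw [key]
    obtain ⟨a, ha⟩ := hcz
    obtain ⟨b, hb⟩ := hdz
    exact ⟨(if k = i then a else 0) + (if k = j then b else 0), by
      rw [ha, hb]; push_cast; rfl⟩
  · obtain ⟨i, c, hc, rfl⟩ := mem_div.1 h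
    simp only [pairing, real_inner_smul_left, real_inner_smul_right, inner_eps]
    rcases hc with rfl | rfl <;> by_cases hk : k = i
    · exact ⟨1, by simp [hk]⟩
    · exact ⟨0, by simp [hk]⟩
    · exact ⟨-1, by simp [hk]⟩
    · exact ⟨0, by simp [hk]⟩

lemma refl_eps {n : ℕ} {α : E n} (hα : α ∈ BCn n) :
    ∃ σ : Equiv.Perm (Fin n), ∃ s : Fin n → ℝ, (∀ k, s k = 1 ∨ s k = -1) ∧
      ∀ k, reflRoot α (eps k) = s k • eps (σ k) := by
  have single : ∀ (i : Fin n) (c : ℝ), c ≠ 0 → ∀ k, reflRoot (c • eps i) (eps k : E n) =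
      (if k = i then (-1:ℝ) else 1) • eps k := by
    intro i c hc k
    simp only [reflRoot, pairing, real_inner_smul_left, real_inner_smul_right, inner_eps]
    by_cases hk : k = i
    · subst hk
      simp only [if_true, smul_smul]
      have : 2 * (c * 1) / (c * (c * 1)) * c = (2:ℝ) := by field_simp
      rw [this, two_smul]; simp
    · simp [hk]
  rcases hα with (h | h) | h
  · obtain ⟨i, c, hc, rfl⟩ := mem_short.1 h
    refine ⟨1, fun k => if k = i then -1 else 1, fun k => ?_, fun k => ?_⟩
    · dsimp only; split_ifs <;> simp
    · simpa using single i c (by rcases hc with rfl | rfl <;> norm_num) k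
  · obtain ⟨i, j, hij, c, d, hc, hd, rfl⟩ := h
    refine ⟨Equiv.swap i j, fun k => if k = i ∨ k = j then -(c * d) else 1, fun k => ?_,
      fun k => ?_⟩
    · dsimp only
      rcases hc with rfl | rfl <;> rcases hd with rfl | rfl <;> split_ifs <;> simp
    · have hc2 : c * c = 1 := by rcases hc with rfl | rfl <;> norm_num
      have hd2 : d * d = 1 := by rcases hd with rfl | rfl <;> norm_num
      have key : pairing (eps k) (c • eps i + d • eps j)
          = (if k = i then c else 0) + (if k = j then d else 0) := by
        simp only [pairing, inner_add_left, inner_add_right, real_inner_smul_left,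
          real_inner_smul_right, inner_eps, hij, hij.symm, if_true, if_false]
        simp only [mul_one, mul_zero, add_zero, zero_add, hc2, hd2, mul_ite]
        ring
      rw [reflRoot, key]
      by_cases h1 : k = i
      · subst h1
        simp [hij, smul_smul, hc2]
      · by_cases h2 : k = j
        · subst h2
          simp [hij.symm, smul_smul, hd2, mul_comm d c]
        · simp [h1, h2, Equiv.swap_apply_of_ne_of_ne h1 h2]
  · obtain ⟨i, c, hc, rfl⟩ := mem_div.1 h
    refine ⟨1, fun k => if k = i then -1 else 1, fun k => ?_, fun k => ?_⟩
    · dsimp only; split_ifs <;> simp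
    · simpa using single i (2 * c) (by rcases hc with rfl | rfl <;> norm_num) k

lemma sgn_mul {c d : ℝ} (hc : c = 1 ∨ c = -1) (hd : d = 1 ∨ d = -1) :
    c * d = 1 ∨ c * d = -1 := by
  rcases hc with rfl | rfl <;> rcases hd with rfl | rfl <;> simp

lemma refl_short {n : ℕ} {α β : E n} (hα : α ∈ BCn n) (hβ : β ∈ shortBC n) :
    reflRoot α β ∈ shortBC n := by
  obtain ⟨σ, s, hs, h⟩ := refl_eps hα
  obtain ⟨i, c, hc, rfl⟩ := mem_short.1 hβ
  rw [refl_smul, h, smul_smul]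
  exact mem_short.2 ⟨_, _, sgn_mul hc (hs i), rfl⟩

lemma refl_div {n : ℕ} {α β : E n} (hα : α ∈ BCn n) (hβ : β ∈ divBC n) :
    reflRoot α β ∈ divBC n := by
  obtain ⟨σ, s, hs, h⟩ := refl_eps hα
  obtain ⟨i, c, hc, rfl⟩ := mem_div.1 hβ
  rw [refl_smul, h, smul_smul, mul_assoc]
  exact mem_div.2 ⟨_, _, sgn_mul hc (hs i), rfl⟩

lemma refl_long {n : ℕ} {α β : E n} (hα : α ∈ BCn n) (hβ : β ∈ longBC n) :
    reflRoot α β ∈ longBC n := by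
  obtain ⟨σ, s, hs, h⟩ := refl_eps hα
  obtain ⟨i, j, hij, c, d, hc, hd, rfl⟩ := hβ
  rw [refl_add, refl_smul, refl_smul, h, h, smul_smul, smul_smul]
  exact ⟨_, _, σ.injective.ne hij, _, _, sgn_mul hc (hs i), sgn_mul hd (hs j), rfl⟩

lemma pairing_int {n : ℕ} {α β : E n} (hα : α ∈ BCn n) (hβ : β ∈ BCn n) :
    ∃ m : ℤ, pairing β α = m := by
  choose p hp using pairing_eps hα
  have hz : ∀ c : ℝ, (c = 1 ∨ c = -1) → ∃ m : ℤ, c = m := by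
    rintro c (rfl | rfl)
    exacts [⟨1, by simp⟩, ⟨-1, by simp⟩]
  rcases hβ with (h | h) | h
  · obtain ⟨i, c, hc, rfl⟩ := mem_short.1 h
    obtain ⟨a, rfl⟩ := hz c hc
    exact ⟨a * p i, by rw [pairing_smul', hp]; push_cast; rfl⟩
  · obtain ⟨i, j, hij, c, d, hc, hd, rfl⟩ := h
    obtain ⟨a, rfl⟩ := hz c hc
    obtain ⟨b, rfl⟩ := hz d hd
    exact ⟨a * p i + b * p j, by
      rw [pairing_add', pairing_smul', pairing_smul', hp, hp]; push_cast; rfl⟩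
  · obtain ⟨i, c, hc, rfl⟩ := mem_div.1 h
    obtain ⟨a, rfl⟩ := hz c hc
    exact ⟨2 * a * p i, by rw [pairing_smul', hp]; push_cast; rfl⟩

/-- sum of the coordinates in `T` -/
def fT {n : ℕ} (T : Finset (Fin n)) (v : E n) : ℝ := ∑ j ∈ T, v j

lemma fT_add {n : ℕ} (T : Finset (Fin n)) (v w : E n) : fT T (v + w) = fT T v + fT T w := by
  simp [fT, Finset.sum_add_distrib]

lemma fT_smul {n : ℕ} (T : Finset (Fin n)) (c : ℝ) (v : E n) : fT T (c • v) = c * fT T v := by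
  simp [fT, Finset.mul_sum]

lemma fT_eps {n : ℕ} (T : Finset (Fin n)) (i : Fin n) :
    fT T (eps i) = if i ∈ T then 1 else 0 := by
  simp [fT, eps, Pi.single_apply]

/-- vectors whose `T`-coordinate sum is even -/
def MT {n : ℕ} (T : Finset (Fin n)) : Set (E n) := {v | ∃ m : ℤ, fT T v = 2 * m}

lemma div_sub_MT {n : ℕ} (T : Finset (Fin n)) : divBC n ⊆ MT T := by
  intro v hv
  obtain ⟨i, c, hc, rfl⟩ := mem_div.1 hv
  show ∃ m : ℤ, _
  rw [fT_smul, fT_eps]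
  by_cases hi : i ∈ T
  · rcases hc with rfl | rfl
    · exact ⟨1, by simp [hi]⟩
    · exact ⟨-1, by simp [hi]⟩
  · exact ⟨0, by simp [hi]⟩

lemma one_ne_even (m : ℤ) : (1:ℝ) ≠ 2 * m := by
  intro h
  have : (1:ℤ) = 2 * m := by exact_mod_cast h
  omega

lemma eps_mem_MT {n : ℕ} (T : Finset (Fin n)) (i : Fin n) : eps i ∈ MT T ↔ i ∉ T := by
  constructor
  · rintro ⟨m, hm⟩ hi
    rw [fT_eps, if_pos hi] at hm
    exact one_ne_even m hm
  · intro hi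
    exact ⟨0, by simp [fT_eps, hi]⟩

lemma eps_short {n : ℕ} (i : Fin n) : eps i ∈ shortBC n := ⟨i, Or.inl rfl⟩

lemma eps_ne_zero {n : ℕ} (i : Fin n) : (eps i : E n) ≠ 0 := by
  intro h
  have := inner_eps i i
  simp [h] at this

lemma add_long {n : ℕ} {i j : Fin n} (h : i ≠ j) : (eps i + eps j : E n) ∈ longBC n :=
  ⟨i, j, h, 1, 1, by simp, by simp, by simp⟩

section generic

variable {n : ℕ} {R : Set (E n)}

lemma Bn_sub_BCn : Bn n ⊆ BCn n := fun _ h => Or.inl h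

lemma closed_MT (hn : 2 ≤ n) (h1 : Bn n ⊆ R) (h2 : R ⊆ BCn n)
    (h3 : ∀ α ∈ R, ∀ β ∈ R, reflRoot α β ∈ R) (T : Finset (Fin n)) :
    IsClosedSubRS R (MT T ∩ R) := by
  refine ⟨⟨?_, Set.inter_subset_right, ?_⟩, ?_⟩
  · by_cases hT : ∃ i, i ∉ T
    · obtain ⟨i, hi⟩ := hT
      exact ⟨eps i, (eps_mem_MT T i).2 hi, h1 (Or.inl (eps_short i))⟩
    · push Not at hT
      have hne : (⟨0, by omega⟩ : Fin n) ≠ ⟨1, by omega⟩ := by simp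
      refine ⟨_, ?_, h1 (Or.inr (add_long hne))⟩
      exact ⟨1, by rw [fT_add, fT_eps, fT_eps, if_pos (hT _), if_pos (hT _)]; norm_num⟩
  · rintro α ⟨⟨a, ha⟩, hα⟩ β ⟨⟨b, hb⟩, hβ⟩
    refine ⟨?_, h3 α hα β hβ⟩
    obtain ⟨m, hm⟩ := pairing_int (h2 hα) (h2 hβ)
    refine ⟨b - m * a, ?_⟩
    have : reflRoot α β = β + (-(m:ℝ)) • α := by
      rw [reflRoot, hm, neg_smul, sub_eq_add_neg]
    rw [this, fT_add, fT_smul, ha, hb]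
    push_cast; ring
  · rintro α ⟨⟨a, ha⟩, hα⟩ β ⟨⟨b, hb⟩, hβ⟩ h
    exact ⟨⟨a + b, by rw [fT_add, ha, hb]; push_cast; ring⟩, h⟩

lemma MT_ne (h1 : Bn n ⊆ R) {T : Finset (Fin n)} (hT : T.Nonempty) : MT T ∩ R ≠ R := by
  intro h
  obtain ⟨i, hi⟩ := hT
  have : eps i ∈ MT T ∩ R := by
    rw [h]; exact h1 (Or.inl (eps_short i))
  exact (eps_mem_MT T i).1 this.1 hi

lemma MT_inj (h1 : Bn n ⊆ R) {T S : Finset (Fin n)} (hS : S.Nonempty)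
    (h : MT T ∩ R ⊆ MT S ∩ R) : T = S := by
  have hST : ∀ i ∈ S, i ∈ T := by
    intro i hi
    by_contra hc
    exact (eps_mem_MT S i).1 (h ⟨(eps_mem_MT T i).2 hc, h1 (Or.inl (eps_short i))⟩).1 hi
  refine Finset.Subset.antisymm ?_ hST
  intro j hj
  by_contra hc
  obtain ⟨k, hk⟩ := hS
  have hjk : j ≠ k := by rintro rfl; exact hc hk
  have hm : eps j + eps k ∈ MT T ∩ R := by
    refine ⟨⟨1, ?_⟩, h1 (Or.inr (add_long hjk))⟩
    rw [fT_add, fT_eps, fT_eps, if_pos hj, if_pos (hST k hk)]; norm_num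
  obtain ⟨m, hm⟩ := (h hm).1
  rw [fT_add, fT_eps, fT_eps, if_neg hc, if_pos hk, zero_add] at hm
  exact one_ne_even m hm

lemma sgn_mem {Δ : Set (E n)} (h : IsClosedSubRS R Δ) {i : Fin n} {c : ℝ}
    (hc : c = 1 ∨ c = -1) (hm : c • eps i ∈ Δ) {d : ℝ} (hd : d = 1 ∨ d = -1) :
    d • eps i ∈ Δ := by
  have hne : c • (eps i : E n) ≠ 0 :=
    smul_ne_zero (by rcases hc with rfl | rfl <;> norm_num) (eps_ne_zero i)
  have hneg := h.1.2.2 _ hm _ hm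
  rw [refl_self _ hne] at hneg
  rcases hc with rfl | rfl <;> rcases hd with rfl | rfl <;> first | simpa using hm | simpa using hneg

open Classical in
lemma exists_MT (h1 : Bn n ⊆ R) (h2 : R ⊆ BCn n) {Δ : Set (E n)}
    (h : IsClosedSubRS R Δ) (hne : Δ ≠ R) :
    ∃ T : Finset (Fin n), T.Nonempty ∧ Δ ⊆ MT T ∩ R := by
  have hsub := h.1.2.1
  have hcl := h.2
  refine ⟨Finset.univ.filter (fun i => eps i ∉ Δ), ?_, ?_⟩
  · by_contra hT
    have hall : ∀ i, eps i ∈ Δ := by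
      intro i
      by_contra hc
      exact hT ⟨i, by simp [hc]⟩
    have hs : ∀ i, ∀ c : ℝ, (c = 1 ∨ c = -1) → c • eps i ∈ Δ := fun i c hc =>
      sgn_mem h (c := 1) (Or.inl rfl) (by simpa using hall i) hc
    apply hne
    refine Set.Subset.antisymm hsub ?_
    intro v hv
    rcases h2 hv with (h' | h') | h'
    · obtain ⟨i, c, hc, rfl⟩ := mem_short.1 h'
      exact hs i c hc
    · obtain ⟨i, j, hij, c, d, hc, hd, rfl⟩ := h'
      exact hcl _ (hs i c hc) _ (hs j d hd) hv
    · obtain ⟨i, c, hc, rfl⟩ := mem_div.1 h'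
      rw [two_mul, add_smul] at hv ⊢
      exact hcl _ (hs i c hc) _ (hs i c hc) hv
  · intro v hv
    refine ⟨?_, hsub hv⟩
    rcases h2 (hsub hv) with (h' | h') | h'
    · obtain ⟨i, c, hc, rfl⟩ := mem_short.1 h'
      have : eps i ∈ Δ := by simpa using sgn_mem h hc hv (d := 1) (Or.inl rfl)
      exact ⟨0, by simp [fT_smul, fT_eps, this]⟩
    · obtain ⟨i, j, hij, c, d, hc, hd, rfl⟩ := h'
      have aux : ∀ (i j : Fin n) (c d : ℝ), (c = 1 ∨ c = -1) → (d = 1 ∨ d = -1) →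
          c • eps i + d • eps j ∈ Δ → eps i ∈ Δ → eps j ∈ Δ := by
        intro i j c d hc hd hv hi
        have hi' : (-c) • eps i ∈ Δ := sgn_mem h (c := 1) (Or.inl rfl) (by simpa using hi)
          (by rcases hc with rfl | rfl <;> simp)
        have e : (-c) • eps i + (c • eps i + d • eps j) = (d • eps j : E n) := by
          rw [neg_smul]; abel
        have := hcl _ hi' _ hv (by rw [e]; exact h1 (Or.inl (mem_short.2 ⟨j, d, hd, rfl⟩)))
        rw [e] at this
        simpa using sgn_mem h hd this (d := 1) (Or.inl rfl)
      have a1 := aux i j c d hc hd hv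
      have a2 := aux j i d c hd hc (by rwa [add_comm])
      show ∃ m : ℤ, _
      rw [fT_add, fT_smul, fT_smul, fT_eps, fT_eps]
      by_cases hi : eps i ∈ Δ
      · exact ⟨0, by simp [hi, a1 hi]⟩
      · have hj : eps j ∉ Δ := fun hj => hi (a2 hj)
        simp only [Finset.mem_filter, Finset.mem_univ, true_and, hi, hj, not_false_eq_true,
          if_true]
        rcases hc with rfl | rfl <;> rcases hd with rfl | rfl
        exacts [⟨1, by norm_num⟩, ⟨0, by norm_num⟩, ⟨0, by norm_num⟩, ⟨-1, by norm_num⟩]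
    · exact div_sub_MT _ h'

lemma max_iff (hn : 2 ≤ n) (h1 : Bn n ⊆ R) (h2 : R ⊆ BCn n)
    (h3 : ∀ α ∈ R, ∀ β ∈ R, reflRoot α β ∈ R) (Δ : Set (E n)) :
    IsMaxClosedSubRS R Δ ↔ ∃ T : Finset (Fin n), T.Nonempty ∧ Δ = MT T ∩ R := by
  constructor
  · rintro ⟨hc, hne, hmax⟩
    obtain ⟨T, hT, hs⟩ := exists_MT h1 h2 hc hne
    exact ⟨T, hT, (hmax _ (closed_MT hn h1 h2 h3 T) (MT_ne h1 hT) hs).symm⟩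
  · rintro ⟨T, hT, rfl⟩
    refine ⟨closed_MT hn h1 h2 h3 T, MT_ne h1 hT, fun Δ' hc hne hs => ?_⟩
    obtain ⟨S, hS, hs'⟩ := exists_MT h1 h2 hc hne
    obtain rfl := MT_inj h1 hS (hs.trans hs')
    exact Set.Subset.antisymm hs' hs

end generic

lemma max_BC {n : ℕ} (hn : 2 ≤ n) (Δ : Set (E n)) : IsMaxClosedSubRS (BCn n) Δ ↔
    ∃ T : Finset (Fin n), T.Nonempty ∧ Δ = MT T ∩ BCn n := by
  refine max_iff hn Bn_sub_BCn subset_rfl ?_ Δ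
  rintro α hα β ((h | h) | h)
  · exact Or.inl (Or.inl (refl_short hα h))
  · exact Or.inl (Or.inr (refl_long hα h))
  · exact Or.inr (refl_div hα h)

lemma max_B {n : ℕ} (hn : 2 ≤ n) (Δ : Set (E n)) : IsMaxClosedSubRS (Bn n) Δ ↔
    ∃ T : Finset (Fin n), T.Nonempty ∧ Δ = MT T ∩ Bn n := by
  refine max_iff hn subset_rfl Bn_sub_BCn ?_ Δ
  rintro α hα β (h | h)
  · exact Or.inl (refl_short (Bn_sub_BCn hα) h)
  · exact Or.inr (refl_long (Bn_sub_BCn hα) h)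

lemma MT_BC {n : ℕ} (T : Finset (Fin n)) : MT T ∩ BCn n = divBC n ∪ MT T ∩ Bn n := by
  ext v
  constructor
  · rintro ⟨h, h' | h'⟩
    · exact Or.inr ⟨h, h'⟩
    · exact Or.inl h'
  · rintro (h | ⟨h, h'⟩)
    · exact ⟨div_sub_MT T h, Or.inr h⟩
    · exact ⟨h, Or.inl h'⟩

/-- Corollary 3.6: maximal closed subroot systems of `BC_n`. -/
theorem statement9 {n : ℕ} (hn : 2 ≤ n) (Δ : Set (E n)) (hΔ : Δ ⊆ BCn n) :
    (IsMaxClosedSubRS (BCn n) Δ ↔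
      divBC n ⊆ Δ ∧ IsMaxClosedSubRS (Bn n) (Δ ∩ Bn n)) ∧
    (IsMaxClosedSubRS (BCn n) Δ ↔
      ∃ Δ'' : Set (E n), IsMaxClosedSubRS (Bn n) Δ'' ∧ Δ = divBC n ∪ Δ'') := by
  have second : IsMaxClosedSubRS (BCn n) Δ ↔
      ∃ Δ'' : Set (E n), IsMaxClosedSubRS (Bn n) Δ'' ∧ Δ = divBC n ∪ Δ'' := by
    rw [max_BC hn]
    constructor
    · rintro ⟨T, hT, rfl⟩
      exact ⟨_, (max_B hn _).2 ⟨T, hT, rfl⟩, MT_BC T⟩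
    · rintro ⟨Ψ, hΨ, rfl⟩
      obtain ⟨T, hT, rfl⟩ := (max_B hn _).1 hΨ
      exact ⟨T, hT, (MT_BC T).symm⟩
  refine ⟨⟨fun h => ?_, ?_⟩, second⟩
  · obtain ⟨T, hT, rfl⟩ := (max_BC hn _).1 h
    refine ⟨fun v hv => ⟨div_sub_MT T hv, Or.inr hv⟩, (max_B hn _).2 ⟨T, hT, ?_⟩⟩
    rw [Set.inter_assoc, Set.inter_eq_right.2 (Bn_sub_BCn (n := n))]
  · rintro ⟨hd, hm⟩
    refine second.2 ⟨_, hm, ?_⟩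
    ext v
    constructor
    · intro hv
      rcases hΔ hv with h' | h'
      · exact Or.inr ⟨hv, h'⟩
      · exact Or.inl h'
    · rintro (h' | h')
      · exact hd h'
      · exact h'.1

end BdS
end
end
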